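/- Let d ≥ 2, let G : (0,∞) → ℝ be C² with G''(s) > 0 for all s > 0, lim_{s→0⁺} G'(s) = 0 and lim_{s→∞} G'(s) = 1, and set a_G(s) := G'(s)/s. For r₀ > 0 and δ ∈ (0,1) define b(r) := (G')^{-1}((1−δ)^{d−1} r₀^{d−1}/r^{d−1}) for r ≥ r₀ and ω(x) := ∫_{r₀}^{|x|} b(r) dr. Then for every x with |x| > r₀ such that a_G'(b(|x|)) ≤ 0, one has Δω(x) ≤ 0, i.e. ω is super-harmonic at such points. -/

import Mathlib

open Set Filter Topology MeasureTheory

/-- Pointwise divergence of a vector field on `ℝ^d`: the sum of the partial derivatives of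
its components. -/
noncomputable def diver {d : ℕ} (X : EuclideanSpace ℝ (Fin d) → EuclideanSpace ℝ (Fin d))
    (x : EuclideanSpace ℝ (Fin d)) : ℝ :=
  ∑ i, fderiv ℝ (fun y => X y i) x (EuclideanSpace.single i 1)

/-!
A flux identity `g (b r) = c / r ^ (d - 1)` makes `g (b |x|) x / |x|` divergence-free.
Differentiating it gives `g' (b r) b' r = -(d - 1) g (b r) / r`, so that the Laplacian
`b' + (d - 1) b / r` of the radial function `ω x = ∫ r in r₀..|x|, b r` equals
`(d - 1) (b g' (b) - g (b)) / (r g' (b)) = (d - 1) b² a' (b) / (r g' (b))` with `a s = g s / s`.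
As `g' > 0`, it has the sign of the derivative of `a` at `b (|x|)`.
-/

section Radial

variable {E : Type*} [NormedAddCommGroup E] [InnerProductSpace ℝ E] {x : E}

theorem hasFDerivAt_norm_of_ne_zero (hx : x ≠ 0) :
    HasFDerivAt (fun y : E => ‖y‖) (‖x‖⁻¹ • innerSL ℝ x) x := by
  have hsqrt := (hasStrictFDerivAt_norm_sq x).hasFDerivAt.sqrt (by positivity)
  simp only [Real.sqrt_sq (norm_nonneg _)] at hsqrt
  refine hsqrt.congr_fderiv ?_
  rw [← Nat.cast_smul_eq_nsmul ℝ, smul_smul]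
  congr 1
  field_simp
  norm_num

theorem hasFDerivAt_comp_norm {f : ℝ → ℝ} {f' : ℝ} (hx : x ≠ 0) (hf : HasDerivAt f f' ‖x‖) :
    HasFDerivAt (fun y : E => f ‖y‖) ((f' / ‖x‖) • innerSL ℝ x) x := by
  rw [div_eq_mul_inv, mul_smul]
  exact hf.comp_hasFDerivAt x (hasFDerivAt_norm_of_ne_zero hx)

theorem hasGradientAt_comp_norm [CompleteSpace E] {f : ℝ → ℝ} {f' : ℝ} (hx : x ≠ 0)
    (hf : HasDerivAt f f' ‖x‖) :
    HasGradientAt (fun y : E => f ‖y‖) ((f' / ‖x‖) • x) x := by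
  refine hasGradientAt_iff_hasFDerivAt.mpr ((hasFDerivAt_comp_norm hx hf).congr_fderiv ?_)
  ext v
  simp

end Radial

section Divergence

variable {d : ℕ} {X Y : EuclideanSpace ℝ (Fin d) → EuclideanSpace ℝ (Fin d)}
  {x : EuclideanSpace ℝ (Fin d)}

theorem diver_congr (h : X =ᶠ[𝓝 x] Y) : diver X x = diver Y x :=
  Finset.sum_congr rfl fun i _ =>
    DFunLike.congr_fun (h.fun_comp fun v => v i).fderiv_eq (EuclideanSpace.single i 1)

theorem diver_eq_trace {X' : EuclideanSpace ℝ (Fin d) →L[ℝ] EuclideanSpace ℝ (Fin d)}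
    (hX : HasFDerivAt X X' x) : diver X x = LinearMap.trace ℝ _ X'.toLinearMap := by
  have hcoord (i : Fin d) :
      HasFDerivAt (fun y => X y i) (EuclideanSpace.proj (𝕜 := ℝ) i ∘L X') x :=
    (EuclideanSpace.proj (𝕜 := ℝ) i).hasFDerivAt.comp x hX
  rw [LinearMap.trace_eq_sum_inner _ (EuclideanSpace.basisFun (Fin d) ℝ)]
  simp [diver, fun i => (hcoord i).fderiv, EuclideanSpace.inner_single_left]

theorem diver_smul {u : EuclideanSpace ℝ (Fin d) → ℝ} (hu : DifferentiableAt ℝ u x)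
    (hX : DifferentiableAt ℝ X x) :
    diver (fun y => u y • X y) x = u x * diver X x + fderiv ℝ u x (X x) := by
  rw [diver_eq_trace (hu.hasFDerivAt.fun_smul hX.hasFDerivAt), diver_eq_trace hX.hasFDerivAt]
  simp

theorem diver_id : diver (fun y => y) x = d := by
  have hid : HasFDerivAt (fun y => y) (.id ℝ _) x := hasFDerivAt_id x
  rw [diver_eq_trace hid]
  simp

theorem diver_comp_norm_smul {φ : ℝ → ℝ} {φ' : ℝ} (hx : x ≠ 0) (hφ : HasDerivAt φ φ' ‖x‖) :
    diver (fun y => φ ‖y‖ • y) x = φ' * ‖x‖ + d * φ ‖x‖ := by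
  have hfderiv := hasFDerivAt_comp_norm hx hφ
  rw [diver_smul hfderiv.differentiableAt differentiableAt_fun_id, diver_id]
  have hradial : fderiv ℝ (fun y => φ ‖y‖) x x = φ' * ‖x‖ := by
    rw [hfderiv.fderiv]
    simp only [smul_apply, coe_innerSL_apply, real_inner_self_eq_norm_sq, smul_eq_mul]
    field_simp
  linarith

theorem diver_gradient_comp_norm {f f' : ℝ → ℝ} {f'' : ℝ} (hx : x ≠ 0)
    (hf : ∀ᶠ r in 𝓝 ‖x‖, HasDerivAt f (f' r) r) (hf' : HasDerivAt f' f'' ‖x‖) :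
    diver (gradient fun y => f ‖y‖) x = f'' + (d - 1) * f' ‖x‖ / ‖x‖ := by
  have hnorm : ‖x‖ ≠ 0 := norm_ne_zero_iff.mpr hx
  have hgrad : gradient (fun y => f ‖y‖) =ᶠ[𝓝 x] fun y => (f' ‖y‖ / ‖y‖) • y := by
    filter_upwards [continuous_norm.continuousAt.eventually hf, isOpen_ne.mem_nhds hx]
      with y hy hy0
    exact (hasGradientAt_comp_norm hy0 hy).gradient
  rw [diver_congr hgrad, diver_comp_norm_smul (φ := fun r => f' r / r) hx
    (hf'.fun_div (hasDerivAt_id' _) hnorm)]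
  field_simp
  ring

end Divergence

theorem hasDerivAt_integral_of_continuousOn_Ici {E : Type*} [NormedAddCommGroup E]
    [NormedSpace ℝ E] [CompleteSpace E] {f : ℝ → E} {a t : ℝ} (hf : ContinuousOn f (Ici a))
    (ht : a < t) : HasDerivAt (fun u => ∫ s in a..u, f s) (f t) t := by
  have hint : IntervalIntegrable f volume a t :=
    (hf.mono (uIcc_of_le ht.le ▸ Icc_subset_Ici_self)).intervalIntegrable
  have hmeas : StronglyMeasurableAtFilter f (𝓝 t) :=
    (hf.mono Ioi_subset_Ici_self).stronglyMeasurableAtFilter isOpen_Ioi t ht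
  exact intervalIntegral.integral_hasDerivAt_right hint hmeas (hf.continuousAt (Ici_mem_nhds ht))

theorem hasDerivAt_const_div_pow {𝕜 : Type*} [NontriviallyNormedField 𝕜] (c : 𝕜) (n : ℕ) {t : 𝕜}
    (ht : t ≠ 0) : HasDerivAt (fun s => c / s ^ n) (-(n * (c / t ^ n) / t)) t := by
  have hzpow := (hasDerivAt_zpow (-n : ℤ) t (.inl ht)).const_mul c
  simp only [zpow_neg, zpow_natCast, ← div_eq_mul_inv] at hzpow
  refine hzpow.congr_deriv ?_
  rw [zpow_sub_one₀ ht, zpow_neg, zpow_natCast]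
  push_cast
  ring

theorem deriv_div_id {𝕜 : Type*} [NontriviallyNormedField 𝕜] {g : 𝕜 → 𝕜} {g' s : 𝕜}
    (hg : HasDerivAt g g' s) (hs : s ≠ 0) :
    deriv (fun t => g t / t) s = (s * g' - g s) / s ^ 2 := by
  rw [(hg.fun_div (hasDerivAt_id' s) hs).deriv]
  ring

section Flux

variable {d : ℕ} {g b : ℝ → ℝ} {g' c r₀ : ℝ} {x : EuclideanSpace ℝ (Fin d)}

theorem hasDerivAt_of_flux {n : ℕ} {r : ℝ} (hr : r ≠ 0) (hb : ContinuousAt b r)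
    (hflux : ∀ᶠ s in 𝓝 r, g (b s) = c / s ^ n) (hg : HasDerivAt g g' (b r)) (hg' : g' ≠ 0) :
    HasDerivAt b (-(n * g (b r) / r) / g') r := by
  rw [hflux.self_of_nhds]
  exact hg.of_comp_left hb (hasDerivAt_const_div_pow c n hr) hg' hflux

theorem diver_gradient_integral_norm_of_flux (hx : x ≠ 0) (hr₀ : r₀ < ‖x‖)
    (hb : ContinuousOn b (Ici r₀)) (hflux : ∀ᶠ r in 𝓝 ‖x‖, g (b r) = c / r ^ (d - 1))
    (hg : HasDerivAt g g' (b ‖x‖)) (hg' : g' ≠ 0) (hb0 : b ‖x‖ ≠ 0) :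
    diver (gradient fun y => ∫ r in r₀..‖y‖, b r) x =
      (d - 1 : ℕ) * b ‖x‖ ^ 2 / (‖x‖ * g') * deriv (fun s => g s / s) (b ‖x‖) := by
  have hnorm : ‖x‖ ≠ 0 := norm_ne_zero_iff.mpr hx
  have hd : 1 ≤ d := by
    by_contra! hd
    obtain rfl : d = 0 := by omega
    exact hx (Subsingleton.elim x 0)
  have hω : ∀ᶠ r in 𝓝 ‖x‖, HasDerivAt (fun t => ∫ s in r₀..t, b s) (b r) r :=
    (eventually_gt_nhds hr₀).mono fun r hr => hasDerivAt_integral_of_continuousOn_Ici hb hr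
  have hb' := hasDerivAt_of_flux hnorm (hb.continuousAt (Ici_mem_nhds hr₀)) hflux hg hg'
  rw [diver_gradient_comp_norm hx hω hb', deriv_div_id hg hb0, Nat.cast_pred hd]
  field_simp
  ring

end Flux

/- The interval `(0, M)` need not be the whole range of `g`, so that unbounded `g` such as
`s ^ (p - 1)` with `p > 1` are covered. -/
theorem stmt_13_general {d : ℕ} {g g' ginv : ℝ → ℝ} {M c r₀ : ℝ}
    (hg : ∀ s ∈ Ioi 0, HasDerivAt g (g' s) s) (hg' : ∀ s ∈ Ioi 0, 0 < g' s)
    (hginv : RightInvOn ginv g (Ioo 0 M)) (hginv_pos : MapsTo ginv (Ioo 0 M) (Ioi 0))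
    (hginv_cont : ContinuousOn ginv (Ioo 0 M))
    (hr₀ : 0 < r₀) (hc : 0 < c) (hcM : c / r₀ ^ (d - 1) < M)
    {x : EuclideanSpace ℝ (Fin d)} (hx : r₀ < ‖x‖)
    (ha : deriv (fun s => g s / s) (ginv (c / ‖x‖ ^ (d - 1))) ≤ 0) :
    diver (gradient fun y => ∫ r in r₀..‖y‖, ginv (c / r ^ (d - 1))) x ≤ 0 := by
  have hmaps : MapsTo (fun r => c / r ^ (d - 1)) (Ici r₀) (Ioo 0 M) := by
    intro r (hr : r₀ ≤ r)
    have hr_pos : 0 < r := hr₀.trans_le hr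
    refine ⟨by positivity, ?_⟩
    calc c / r ^ (d - 1) ≤ c / r₀ ^ (d - 1) := by gcongr
      _ < M := hcM
  have hdensity : ContinuousOn (fun r => c / r ^ (d - 1)) (Ici r₀) := fun r hr =>
    (hasDerivAt_const_div_pow c (d - 1) (hr₀.trans_le hr).ne').continuousAt.continuousWithinAt
  have hflux : ∀ᶠ r in 𝓝 ‖x‖, g (ginv (c / r ^ (d - 1))) = c / r ^ (d - 1) :=
    (eventually_ge_nhds hx).mono fun r hr => hginv (hmaps hr)
  have hx_pos : 0 < ‖x‖ := hr₀.trans hx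
  have hb_pos : 0 < ginv (c / ‖x‖ ^ (d - 1)) := hginv_pos (hmaps hx.le)
  have hg'_pos := hg' _ hb_pos
  have hb_cont : ContinuousOn (fun r => ginv (c / r ^ (d - 1))) (Ici r₀) :=
    hginv_cont.comp hdensity hmaps
  rw [diver_gradient_integral_norm_of_flux (norm_pos_iff.mp hx_pos) hx
    hb_cont hflux (hg _ hb_pos) hg'_pos.ne' hb_pos.ne']
  exact mul_nonpos_of_nonneg_of_nonpos (by positivity) ha

/-- For the radial prototype barrier `ω(x) = ∫_{r₀}^{|x|} b(r) dr` with
`b(r) = (G')⁻¹((1−δ)^{d−1} r₀^{d−1}/r^{d−1})`: at every point `x` with `|x| > r₀` where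
`a_G'(b(|x|)) ≤ 0`, one has `Δω(x) ≤ 0`, i.e. `ω` is super-harmonic there. -/
theorem stmt_13
    (d : ℕ) (hd : 2 ≤ d)
    (G G' G'' : ℝ → ℝ)
    (hder1 : ∀ s ∈ Ioi (0:ℝ), HasDerivAt G (G' s) s)
    (hder2 : ∀ s ∈ Ioi (0:ℝ), HasDerivAt G' (G'' s) s)
    (hG''cont : ContinuousOn G'' (Ioi 0))
    (hG''pos : ∀ s ∈ Ioi (0:ℝ), 0 < G'' s)
    (hG'0 : Tendsto G' (nhdsWithin 0 (Ioi 0)) (nhds 0))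
    (hG'1 : Tendsto G' atTop (nhds 1))
    (Ginv : ℝ → ℝ) (hGinv0 : Ginv 0 = 0)
    (hGinv : ∀ s ∈ Ioi (0:ℝ), Ginv (G' s) = s)
    (hGinv' : ∀ y ∈ Ioo (0:ℝ) 1, G' (Ginv y) = y ∧ 0 < Ginv y)
    (hGinvmono : StrictMonoOn Ginv (Ico 0 1)) (hGinvcont : ContinuousOn Ginv (Ico 0 1))
    (r₀ δ : ℝ) (hr₀ : 0 < r₀) (hδ : δ ∈ Ioo (0:ℝ) 1)
    (aG b : ℝ → ℝ) (ω : EuclideanSpace ℝ (Fin d) → ℝ)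
    (haG : ∀ s, aG s = G' s / s)
    (hb : ∀ r, b r = Ginv ((1 - δ) ^ (d - 1) * r₀ ^ (d - 1) / r ^ (d - 1)))
    (hω : ∀ x : EuclideanSpace ℝ (Fin d), ω x = ∫ r in r₀..‖x‖, b r) :
    ∀ x : EuclideanSpace ℝ (Fin d), r₀ < ‖x‖ → deriv aG (b ‖x‖) ≤ 0 →
      diver (gradient ω) x ≤ 0 := by
  intro x hx ha
  obtain rfl := funext haG
  obtain rfl := funext hb
  obtain rfl := funext hω
  have hδ_pos : 0 < 1 - δ := sub_pos.mpr hδ.2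
  have hlt_one : (1 - δ) ^ (d - 1) < 1 := pow_lt_one₀ hδ_pos.le (by linarith [hδ.1]) (by omega)
  exact stmt_13_general hder2 hG''pos (fun y hy => (hGinv' y hy).1) (fun y hy => (hGinv' y hy).2)
    (hGinvcont.mono Ioo_subset_Ico_self) hr₀ (by positivity)
    (by rwa [mul_div_cancel_right₀ _ (by positivity)]) hx ha
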